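/- arXiv:2404.12907 — 2 statements merged into one kernel-verified Lean document; each statement's English description precedes it below -/
import Mathlib

section
/- Let T be a tournament, k ∈ ℕ, and G_LONG the k-long graph of T. Let l ∈ ℕ with l ≤ k, and let F be a feedback vertex set of T with |F| ≤ l. Then: (1) F is a vertex cover of G_LONG; (2) the k-heavy set Heavy(T,k) = {v : deg_{G_LONG}(v) > k} satisfies Heavy(T,k) ⊆ F; and (3) the induced subgraph of G_LONG on V(G_LONG) \ Heavy(T,k) has at most k·l edges. -/
variable {V : Type*}

def IsTournament (E : V → V → Prop) : Prop :=
  (∀ v : V, ¬ E v v) ∧ ∀ u v : V, u ≠ v → (E u v ↔ ¬ E v u)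

def Acyclic (E : V → V → Prop) : Prop :=
  ∀ v : V, ¬ Relation.TransGen E v v

noncomputable def indeg [Fintype V] (E : V → V → Prop) (v : V) : ℕ :=
  Set.ncard {u : V | E u v}

noncomputable def indegOn [Fintype V] (E : V → V → Prop) (X : Set V) (v : V) : ℕ :=
  Set.ncard {u : V | u ∈ X ∧ E u v}

def IsTriangle (E : V → V → Prop) (t : V × V × V) : Prop :=
  E t.1 t.2.1 ∧ E t.2.1 t.2.2 ∧ E t.2.2 t.1

def triArcs (t : V × V × V) : Set (V × V) :=
  {(t.1, t.2.1), (t.2.1, t.2.2), (t.2.2, t.1)}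

def IsADTFamily (E : V → V → Prop) (F : Finset (V × V × V)) : Prop :=
  (∀ t ∈ F, IsTriangle E t) ∧
    ∀ t ∈ F, ∀ s ∈ F, t ≠ s → Disjoint (triArcs t) (triArcs s)

noncomputable def ADT (E : V → V → Prop) : ℕ :=
  sSup {n : ℕ | ∃ F : Finset (V × V × V), IsADTFamily E F ∧ F.card = n}

def IsFAS (E : V → V → Prop) (S : Finset (V × V)) : Prop :=
  Acyclic fun u v => E u v ∧ (u, v) ∉ S

noncomputable def FAST (E : V → V → Prop) : ℕ :=
  sInf {n : ℕ | ∃ S : Finset (V × V), IsFAS E S ∧ S.card = n}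

def IsFVS (E : V → V → Prop) (F : Finset V) : Prop :=
  Acyclic fun a b => E a b ∧ a ∉ F ∧ b ∉ F

noncomputable def FVST [Fintype V] (E : V → V → Prop) : ℕ :=
  sInf {n : ℕ | ∃ F : Finset V, IsFVS E F ∧ F.card = n}

noncomputable def maxdb [Fintype V] (E : V → V → Prop) : ℕ :=
  (Finset.range (Fintype.card V)).sup fun d => Set.ncard {v : V | indeg E v = d}

open Classical in
noncomputable def prefLen [Fintype V] (E : V → V → Prop) : ℕ :=
  if ∀ d < Fintype.card V, Set.ncard {v : V | indeg E v = d} = 1 then Fintype.card V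
  else sInf {d : ℕ | d < Fintype.card V ∧ Set.ncard {v : V | indeg E v = d} ≠ 1}

noncomputable def prefSet [Fintype V] (E : V → V → Prop) : Set V :=
  {v : V | indeg E v < prefLen E}

noncomputable def minIndeg [Fintype V] (E : V → V → Prop) : ℕ :=
  sInf {k : ℕ | ∃ v : V, indeg E v = k}

noncomputable def minIndegOn [Fintype V] (E : V → V → Prop) (X : Set V) : ℕ :=
  sInf {k : ℕ | ∃ v ∈ X, indegOn E X v = k}

def emptyBuckets [Fintype V] (E : V → V → Prop) : Set ℕ :=
  {d : ℕ | d < Fintype.card V ∧ {v : V | indeg E v = d} = ∅}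

def backArcs [Fintype V] (E : V → V → Prop) : Set (V × V) :=
  {p : V × V | E p.1 p.2 ∧ indeg E p.2 ≤ indeg E p.1}

def reverseArc (E : V → V → Prop) (u v : V) : V → V → Prop :=
  fun a b =>
    (¬ ((a, b) = (u, v) ∨ (a, b) = (v, u)) ∧ E a b) ∨
      ((a, b) = (u, v) ∧ E v u) ∨ ((a, b) = (v, u) ∧ E u v)

def affected [Fintype V] (E : V → V → Prop) (u v : V) : Set V :=
  {w : V | indeg E w + 1 = indeg E u ∨ indeg E w = indeg E u ∨ indeg E w = indeg E u + 1 ∨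
      indeg E w + 1 = indeg E v ∨ indeg E w = indeg E v ∨ indeg E w = indeg E v + 1}

def kLong [Fintype V] (E : V → V → Prop) (k : ℕ) (p : V × V) : Prop :=
  (k : ℤ) ≤ |(indeg E p.1 : ℤ) - (indeg E p.2 : ℤ)|

def longAdj [Fintype V] (E : V → V → Prop) (k : ℕ) (a b : V) : Prop :=
  ((a, b) ∈ backArcs E ∧ kLong E k (a, b)) ∨ ((b, a) ∈ backArcs E ∧ kLong E k (b, a))

def heavySet [Fintype V] (E : V → V → Prop) (k : ℕ) : Set V :=
  {v : V | k < Set.ncard {u : V | longAdj E k u v}}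

/-!
Let `F` be a feedback vertex set and let `uv` be a back arc avoiding `F`. An in-neighbour `w ∉ F`
of `u` must also be an in-neighbour of `v`, as otherwise `u → v → w → u` would be a cycle avoiding
`F`; moreover `u` is an in-neighbour of `v` but not of itself. So the in-degree of `u` is less than
that of `v` plus `|F|`, and a `k`-long back arc with `k ≥ |F|` must meet `F`. What remains holds for
every vertex cover: a vertex outside it has all its neighbours in it, and each of its vertices
accounts for at most as many edges as its degree.
-/

section VertexCover

variable {α : Type*} {r : α → α → Prop}

/-- `C` is a vertex cover of the graph with adjacency relation `r`. This is the analogue of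
`SimpleGraph.IsVertexCover` for a bare relation, the form in which `longAdj` is given. -/
def IsVertexCover (r : α → α → Prop) (C : Set α) : Prop :=
  ∀ a b : α, r a b → a ∈ C ∨ b ∈ C

theorem IsVertexCover.mono {r' : α → α → Prop} {C : Set α} (hC : IsVertexCover r C)
    (h : ∀ a b, r' a b → r a b) : IsVertexCover r' C :=
  fun a b hab ↦ hC a b (h a b hab)

theorem IsVertexCover.mem_of_card_lt_ncard {C : Finset α} (hC : IsVertexCover r C) {v : α}
    (hv : C.card < {u | r u v}.ncard) : v ∈ C := by
  by_contra hvC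
  have neighbors_subset : {u | r u v} ⊆ C := fun u huv ↦ (hC u v huv).resolve_right hvC
  have degree_le := Set.ncard_le_ncard neighbors_subset
  rw [Set.ncard_coe_finset] at degree_le
  exact degree_le.not_gt hv

theorem IsVertexCover.edges_subset_biUnion [Std.Symm r] {C : Set α} (hC : IsVertexCover r C) :
    {e | ∃ a b, e = s(a, b) ∧ r a b} ⊆ ⋃ v ∈ C, (s(·, v)) '' {u | r u v} := by
  rintro _ ⟨a, b, rfl, hab⟩
  rcases hC a b hab with ha | hb
  · exact Set.mem_biUnion ha ⟨b, symm hab, Sym2.eq_swap⟩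
  · exact Set.mem_biUnion hb ⟨a, hab, rfl⟩

theorem IsVertexCover.encard_edges_le_sum [Std.Symm r] {C : Finset α} (hC : IsVertexCover r C) :
    {e | ∃ a b, e = s(a, b) ∧ r a b}.encard ≤ ∑ v ∈ C, {u | r u v}.encard :=
  calc {e | ∃ a b, e = s(a, b) ∧ r a b}.encard
      ≤ (⋃ v ∈ C, (s(·, v)) '' {u | r u v}).encard := Set.encard_le_encard hC.edges_subset_biUnion
    _ ≤ ∑ v ∈ C, ((s(·, v)) '' {u | r u v}).encard := C.set_encard_biUnion_le _
    _ ≤ ∑ v ∈ C, {u | r u v}.encard := Finset.sum_le_sum fun _ _ ↦ Set.encard_image_le _ _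

theorem IsVertexCover.ncard_edges_le_mul [Std.Symm r] {C : Finset α} (hC : IsVertexCover r C)
    {k : ℕ} (hk : ∀ v ∈ C, {u | r u v}.encard ≤ k) :
    {e | ∃ a b, e = s(a, b) ∧ r a b}.ncard ≤ k * C.card := by
  refine ENat.toNat_le_of_le_natCast (hC.encard_edges_le_sum.trans ?_)
  simpa [mul_comm] using Finset.sum_le_card_nsmul C _ _ hk

end VertexCover

/-- Semicomplete digraphs, the relaxation of tournaments in which loops and pairs of opposite arcs
are allowed. -/
def IsSemicomplete (E : V → V → Prop) : Prop :=
  ∀ u v : V, u ≠ v → E u v ∨ E v u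

theorem IsTournament.isSemicomplete {E : V → V → Prop} (hT : IsTournament E) :
    IsSemicomplete E :=
  fun u v huv ↦ or_iff_not_imp_right.2 (hT.2 u v huv).2

section LongGraph

variable {E : V → V → Prop} {F : Finset V} {u v : V}

theorem IsFVS.notMem_inNeighbors_self (hF : IsFVS E F) (hu : u ∉ F) : u ∉ {w | E w u} :=
  fun huu ↦ hF u (.single ⟨huu, hu, hu⟩)

theorem IsFVS.insert_inNeighbors_subset (hF : IsFVS E F) (hE : IsSemicomplete E) (huv : E u v)
    (hu : u ∉ F) (hv : v ∉ F) : insert u {w | E w u} ⊆ {w | E w v} ∪ F := by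
  rintro w (rfl | hwu)
  · exact .inl huv
  by_contra hw
  obtain ⟨hwv, hwF⟩ : ¬ E w v ∧ w ∉ F := not_or.1 hw
  let arcAvoiding (a b : V) : Prop := E a b ∧ a ∉ F ∧ b ∉ F
  have path_v_w : Relation.ReflTransGen arcAvoiding v w := by
    rcases eq_or_ne v w with rfl | hne
    · exact .refl
    · exact .single ⟨(hE v w hne).resolve_right hwv, hv, hwF⟩
  have path_u_w : Relation.TransGen arcAvoiding u w := .head' ⟨huv, hu, hv⟩ path_v_w
  exact hF u (path_u_w.tail ⟨hwu, hwF, hu⟩)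

variable [Fintype V]

theorem IsFVS.indeg_lt_indeg_add_card (hF : IsFVS E F) (hE : IsSemicomplete E) (huv : E u v)
    (hu : u ∉ F) (hv : v ∉ F) : indeg E u < indeg E v + F.card :=
  calc indeg E u + 1 = (insert u {w | E w u}).ncard :=
        (Set.ncard_insert_of_notMem (hF.notMem_inNeighbors_self hu)).symm
    _ ≤ ({w | E w v} ∪ (F : Set V)).ncard :=
        Set.ncard_le_ncard (hF.insert_inNeighbors_subset hE huv hu hv)
    _ ≤ indeg E v + (F : Set V).ncard := Set.ncard_union_le _ _
    _ = indeg E v + F.card := by rw [Set.ncard_coe_finset]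

theorem IsFVS.mem_or_mem_of_kLong_backArc (hF : IsFVS E F) (hE : IsSemicomplete E) {k : ℕ}
    (hFk : F.card ≤ k) (huv : (u, v) ∈ backArcs E) (hk : kLong E k (u, v)) : u ∈ F ∨ v ∈ F := by
  by_contra! ⟨hu, hv⟩
  obtain ⟨arc, indeg_le⟩ : E u v ∧ indeg E v ≤ indeg E u := huv
  have indeg_lt := hF.indeg_lt_indeg_add_card hE arc hu hv
  have long : (k : ℤ) ≤ indeg E u - indeg E v := by
    rwa [kLong, abs_of_nonneg (by simpa using indeg_le)] at hk
  omega

theorem IsFVS.isVertexCover_longAdj (hF : IsFVS E F) (hE : IsSemicomplete E) {k : ℕ}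
    (hFk : F.card ≤ k) : IsVertexCover (longAdj E k) F := by
  rintro a b (⟨hab, hk⟩ | ⟨hba, hk⟩)
  · exact hF.mem_or_mem_of_kLong_backArc hE hFk hab hk
  · exact (hF.mem_or_mem_of_kLong_backArc hE hFk hba hk).symm

/-- Adjacency in the subgraph of the `k`-long graph induced on the vertices that are not
`k`-heavy. -/
def lightAdj (E : V → V → Prop) (k : ℕ) (a b : V) : Prop :=
  longAdj E k a b ∧ a ∉ heavySet E k ∧ b ∉ heavySet E k

instance (E : V → V → Prop) (k : ℕ) : Std.Symm (lightAdj E k) where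
  symm _ _ h := ⟨h.1.symm, h.2.symm⟩

theorem encard_lightAdj_le (E : V → V → Prop) (k : ℕ) (v : V) :
    {u | lightAdj E k u v}.encard ≤ k := by
  by_cases hv : v ∈ heavySet E k
  · simp [lightAdj, hv]
  have degree_le : {u | longAdj E k u v}.ncard ≤ k := not_lt.1 hv
  calc {u | lightAdj E k u v}.encard
      ≤ {u | longAdj E k u v}.encard := Set.encard_le_encard fun _ hu ↦ hu.1
    _ = {u | longAdj E k u v}.ncard := (Set.toFinite _).cast_ncard_eq.symm
    _ ≤ k := by exact_mod_cast degree_le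

end LongGraph

theorem stmt16_general [Fintype V] (E : V → V → Prop) (hE : IsSemicomplete E) (k : ℕ)
    (F : Finset V) (hF : IsFVS E F) (hFk : F.card ≤ k) :
    (∀ a b : V, longAdj E k a b → a ∈ F ∨ b ∈ F) ∧
    heavySet E k ⊆ (F : Set V) ∧
    Set.ncard {e : Sym2 V | ∃ a b : V, e = s(a, b) ∧ longAdj E k a b ∧
      a ∉ heavySet E k ∧ b ∉ heavySet E k} ≤ k * F.card := by
  have cover : IsVertexCover (longAdj E k) F := hF.isVertexCover_longAdj hE hFk
  have light_cover : IsVertexCover (lightAdj E k) F := cover.mono fun _ _ h ↦ h.1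
  exact ⟨cover, fun _ hv ↦ cover.mem_of_card_lt_ncard (hFk.trans_lt hv),
    light_cover.ncard_edges_le_mul fun v _ ↦ encard_lightAdj_le E k v⟩

/-- For `l ≤ k` and a feedback vertex set `F` with `|F| ≤ l`: `F` is a vertex cover of
the k-long graph, the k-heavy set is contained in `F`, and the k-long graph induced on
the complement of the k-heavy set has at most `k·l` edges. -/
theorem stmt16 [Fintype V] (E : V → V → Prop) (hT : IsTournament E) (k l : ℕ)
    (hlk : l ≤ k) (F : Finset V) (hF : IsFVS E F) (hFl : F.card ≤ l) :
    (∀ a b : V, longAdj E k a b → a ∈ F ∨ b ∈ F) ∧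
    heavySet E k ⊆ (F : Set V) ∧
    Set.ncard {e : Sym2 V | ∃ a b : V, e = s(a, b) ∧ longAdj E k a b ∧
      a ∉ heavySet E k ∧ b ∉ heavySet E k} ≤ k * l :=
  have ⟨cover, heavy_subset, edges_le⟩ :=
    stmt16_general E hT.isSemicomplete k F hF (hFl.trans hlk)
  ⟨cover, heavy_subset, edges_le.trans (Nat.mul_le_mul_left k hFl)⟩
end

section
/- Let T be a tournament, F ⊆ V(T), K a finite set of natural numbers (token positions), and rd : V(T) \ F → ℕ a function such that for all w ∈ V(T) \ F, d_{T−F}(w) = rd(w) − |{t ∈ K : t ≤ rd(w)}| and |K| = |F|. Then for every d ∈ ℕ, the reduced degree bucket {w ∈ V(T) \ F : rd(w) = d} has size at most maxdb(T) · (|F| + 1). -/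
variable {V : Type*}

/- Deleting the vertices outside `X` lowers each in-degree by at most `|Xᶜ|`, so the vertices with
the same in-degree from `X` lie in at most `|Xᶜ| + 1` in-degree buckets of the whole digraph. For
`X = V \ F`, the invariant makes `d_{T-F}(w)` a function of `rd w`, hence constant on each reduced
degree bucket. -/

section

variable [Fintype V] {E : V → V → Prop}

theorem indegOn_le_indeg (X : Set V) (v : V) : indegOn E X v ≤ indeg E v :=
  Set.ncard_le_ncard (fun _ hu => hu.2)

theorem indeg_le_indegOn_add_ncard_compl (X : Set V) (v : V) :
    indeg E v ≤ indegOn E X v + Xᶜ.ncard := by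
  have hsub : {u | E u v} ⊆ {u | u ∈ X ∧ E u v} ∪ Xᶜ := fun u hu =>
    (em (u ∈ X)).imp (fun huX => ⟨huX, hu⟩) id
  exact (Set.ncard_le_ncard hsub).trans (Set.ncard_union_le _ _)

theorem indeg_lt_card (hE : ∀ v, ¬ E v v) (v : V) : indeg E v < Fintype.card V := by
  rw [← Nat.card_eq_fintype_card]
  exact Set.ncard_lt_card ((Set.ne_univ_iff_exists_notMem _).2 ⟨v, hE v⟩)

theorem ncard_setOf_indeg_eq_le_maxdb (hE : ∀ v, ¬ E v v) (k : ℕ) :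
    {v | indeg E v = k}.ncard ≤ maxdb E := by
  obtain hempty | ⟨v, rfl⟩ := {v | indeg E v = k}.eq_empty_or_nonempty
  · simp only [hempty, Set.ncard_empty, Nat.zero_le]
  · exact Finset.le_sup (f := fun k => {v | indeg E v = k}.ncard)
      (Finset.mem_range.2 (indeg_lt_card hE v))

theorem ncard_setOf_indeg_mem_le (hE : ∀ v, ¬ E v v) (s : Finset ℕ) :
    {v | indeg E v ∈ s}.ncard ≤ maxdb E * s.card := by
  have hunion : {v | indeg E v ∈ s} = ⋃ k ∈ s, {v | indeg E v = k} := by ext v; simp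
  calc {v | indeg E v ∈ s}.ncard
      ≤ ∑ k ∈ s, {v | indeg E v = k}.ncard := hunion ▸ s.set_ncard_biUnion_le _
    _ ≤ s.card * maxdb E :=
        Finset.sum_le_card_nsmul _ _ _ fun k _ => ncard_setOf_indeg_eq_le_maxdb hE k
    _ = maxdb E * s.card := mul_comm _ _

theorem ncard_setOf_indegOn_eq_le (hE : ∀ v, ¬ E v v) (X : Set V) (m : ℕ) :
    {w | indegOn E X w = m}.ncard ≤ maxdb E * (Xᶜ.ncard + 1) := by
  have hsub : {w | indegOn E X w = m} ⊆ {w | indeg E w ∈ Finset.Icc m (m + Xᶜ.ncard)} := by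
    rintro w rfl
    exact Finset.mem_Icc.2 ⟨indegOn_le_indeg X w, indeg_le_indegOn_add_ncard_compl X w⟩
  calc {w | indegOn E X w = m}.ncard
      ≤ {w | indeg E w ∈ Finset.Icc m (m + Xᶜ.ncard)}.ncard := Set.ncard_le_ncard hsub
    _ ≤ maxdb E * (Finset.Icc m (m + Xᶜ.ncard)).card := ncard_setOf_indeg_mem_le hE _
    _ = maxdb E * (Xᶜ.ncard + 1) := by rw [Nat.card_Icc]; congr 1; omega

theorem stmt19_general {α : Type*} (hE : ∀ v, ¬ E v v) (X : Set V) (rd : V → α) (f : α → ℕ)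
    (hrd : ∀ w ∈ X, indegOn E X w = f (rd w)) (d : α) :
    {w | w ∈ X ∧ rd w = d}.ncard ≤ maxdb E * (Xᶜ.ncard + 1) := by
  have hsub : {w | w ∈ X ∧ rd w = d} ⊆ {w | indegOn E X w = f d} := by
    rintro w ⟨hw, rfl⟩
    exact hrd w hw
  exact (Set.ncard_le_ncard hsub).trans (ncard_setOf_indegOn_eq_le hE X (f d))

end

/-- Every reduced degree bucket has size at most maxdb(T)·(|F| + 1). -/
theorem stmt19 [Fintype V] (E : V → V → Prop) (hT : IsTournament E) (F : Finset V)
    (K : Finset ℕ) (rd : V → ℕ) (hcard : K.card = F.card)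
    (hinv : ∀ w : V, w ∉ F →
      indegOn E ((F : Set V))ᶜ w + (K.filter fun t => t ≤ rd w).card = rd w)
    (d : ℕ) :
    Set.ncard {w : V | w ∉ F ∧ rd w = d} ≤ maxdb E * (F.card + 1) := by
  simpa only [Set.mem_compl_iff, Finset.mem_coe, compl_compl, Set.ncard_coe_finset] using
    stmt19_general hT.1 (F : Set V)ᶜ rd (fun r => r - (K.filter fun t => t ≤ r).card)
      (fun w hw => Nat.eq_sub_of_add_eq (hinv w hw)) d
end
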